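/- arXiv:2502.09453 — 3 statements merged into one kernel-verified Lean document; each statement's English description precedes it below -/
import Mathlib

section
/- For every finite simple graph G = (V,E) with at least one vertex, the VC-dimension of the star class satisfies Δ(G) ≤ VCD(C_star(G)) ≤ Δ(G) + 1. -/
open scoped Classical

noncomputable section

/-! ### Concept classes, VC-dimension, teaching dimension, RTD -/

variable {X : Type*}

/-- A set `S` is shattered by the concept class `𝒞` if every subset of `S`
is the trace on `S` of some concept in `𝒞`. -/
def Shatters [DecidableEq X] (𝒞 : Finset (Finset X)) (S : Finset X) : Prop :=
  ∀ S' ⊆ S, ∃ C ∈ 𝒞, C ∩ S = S'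

/-- The VC-dimension of a concept class: the maximum size of a shattered set. -/
def VCD [DecidableEq X] (𝒞 : Finset (Finset X)) : ℕ :=
  sSup {n | ∃ S : Finset X, Shatters 𝒞 S ∧ S.card = n}

/-- `D` is a teaching set for the concept `C` within the class `𝒞`:
no other concept of `𝒞` agrees with `C` on all of `D`. -/
def IsTeachingSet [DecidableEq X] (𝒞 : Finset (Finset X)) (C D : Finset X) : Prop :=
  ∀ C' ∈ 𝒞, C' ≠ C → ∃ x ∈ D, ¬ ((x ∈ C') ↔ (x ∈ C))

/-- The teaching dimension of the concept `C` within the class `𝒞`: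
the minimum size of a teaching set for `C` in `𝒞`. -/
def TD [DecidableEq X] (𝒞 : Finset (Finset X)) (C : Finset X) : ℕ :=
  sInf {n | ∃ D : Finset X, IsTeachingSet 𝒞 C D ∧ D.card = n}

/-- The minimum teaching dimension over all concepts of the class. -/
def TDmin [DecidableEq X] (𝒞 : Finset (Finset X)) : ℕ :=
  sInf {n | ∃ C ∈ 𝒞, TD 𝒞 C = n}

/-- The recursive teaching dimension: with `𝒞_min` the set of concepts of `𝒞` whose
teaching dimension equals `TDmin 𝒞`, we have `RTD 𝒞 = TDmin 𝒞` if `𝒞 = 𝒞_min`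
and `RTD 𝒞 = max (TDmin 𝒞) (RTD (𝒞 \ 𝒞_min))` otherwise. -/
def RTD [DecidableEq X] (𝒞 : Finset (Finset X)) : ℕ :=
  if h : 𝒞 = 𝒞.filter (fun C => TD 𝒞 C = TDmin 𝒞) then TDmin 𝒞
  else max (TDmin 𝒞) (RTD (𝒞 \ 𝒞.filter (fun C => TD 𝒞 C = TDmin 𝒞)))
termination_by 𝒞.card
decreasing_by
  have hne : 𝒞.Nonempty := by
    rcases Finset.eq_empty_or_nonempty 𝒞 with he | hne
    · exact absurd (by simp [he]) h
    · exact hne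
  obtain ⟨C₀, hC₀⟩ := hne
  have hmem : TDmin 𝒞 ∈ {n | ∃ C ∈ 𝒞, TD 𝒞 C = n} :=
    Nat.sInf_mem ⟨TD 𝒞 C₀, C₀, hC₀, rfl⟩
  obtain ⟨C, hC, hTD⟩ := hmem
  refine Finset.card_lt_card ?_
  refine (Finset.ssubset_iff_of_subset Finset.sdiff_subset).mpr ?_
  exact ⟨C, hC, by simp [Finset.mem_sdiff, Finset.mem_filter, hC, hTD]⟩

/-! ### Graph-theoretic notions -/

/-- The degree of a vertex in a graph on a finite vertex type. -/
def deg {W : Type*} [Fintype W] (T : SimpleGraph W) (v : W) : ℕ :=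
  (Finset.univ.filter (fun w => T.Adj v w)).card

/-- A leaf of a graph (in particular, of a tree) is a vertex of degree 1. -/
def IsLeaf {W : Type*} [Fintype W] (T : SimpleGraph W) (v : W) : Prop :=
  deg T v = 1

/-- The number of leaves of a graph (in particular, of a tree). -/
def leafCount {W : Type*} [Fintype W] (T : SimpleGraph W) : ℕ :=
  (Finset.univ.filter (fun v => IsLeaf T v)).card

variable {V : Type*} [Fintype V] [DecidableEq V]

/-- The open neighborhood of a vertex, as a finset. -/
def nbrFinset (G : SimpleGraph V) (x : V) : Finset V :=
  Finset.univ.filter (fun y => G.Adj x y)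

/-- The closed neighborhood of a vertex, as a finset. -/
def closedNbr (G : SimpleGraph V) (x : V) : Finset V :=
  insert x (nbrFinset G x)

/-- The maximum degree `Δ(G)`. -/
def maxDeg (G : SimpleGraph V) : ℕ :=
  Finset.univ.sup (deg G)

/-- The closed neighborhood of a set of vertices. -/
def closedNbrSet (G : SimpleGraph V) (A : Finset V) : Finset V :=
  A.biUnion (closedNbr G)

/-- The open neighborhood of a set of vertices: `N_G(A) \ A`. -/
def openNbrSet (G : SimpleGraph V) (A : Finset V) : Finset V :=
  closedNbrSet G A \ A

/-- The star class of `G`: all sets `{x} ∪ X` with `X` a set of neighbors of `x`. -/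
def Cstar (G : SimpleGraph V) : Finset (Finset V) :=
  Finset.univ.filter (fun C => ∃ x : V, ∃ Y ⊆ nbrFinset G x, C = insert x Y)

/-- `A` is a connected set of `G`: the induced subgraph `G[A]` is connected. -/
def IsConnSet (G : SimpleGraph V) (A : Finset V) : Prop :=
  (G.induce (A : Set V)).Connected

/-- The class of connected sets of `G` (including the empty set). -/
def Ccon (G : SimpleGraph V) : Finset (Finset V) :=
  Finset.univ.filter (fun A => A = ∅ ∨ IsConnSet G A)

/-- For connected `G`: the maximum number of leaves over all spanning trees of `G`. -/
def ell (G : SimpleGraph V) : ℕ :=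
  sSup {k | ∃ T : SimpleGraph V, T ≤ G ∧ T.IsTree ∧ leafCount T = k}

/-- For a general graph `G`: the maximum of `ell` over the connected components of `G`. -/
def ellGen (G : SimpleGraph V) : ℕ :=
  sSup {k | ∃ c : G.ConnectedComponent, ell (G.induce c.supp) = k}

/-- Every pair of distinct elements of `L` can be connected by a path in `G` which
contains neither `u` nor any element of `L` other than the two endpoints. -/
def ConnectableAvoiding (G : SimpleGraph V) (L : Set V) (u : V) : Prop :=
  ∀ a ∈ L, ∀ b ∈ L, a ≠ b → ∃ p : G.Walk a b, p.IsPath ∧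
    ∀ v ∈ p.support, v ≠ u ∧ (v ∈ L → v = a ∨ v = b)

end

section Shattering

variable {X : Type*} [DecidableEq X] {𝒞 : Finset (Finset X)} {S : Finset X}

theorem shatters_iff_finset_shatters : Shatters 𝒞 S ↔ 𝒞.Shatters S := by
  simp only [Shatters, Finset.Shatters, Finset.inter_comm]

theorem Shatters.card_le_VCD (hS : Shatters 𝒞 S) : S.card ≤ VCD 𝒞 := by
  refine le_csSup ⟨𝒞.vcDim, ?_⟩ ⟨S, hS, rfl⟩
  rintro _ ⟨T, hT, rfl⟩
  exact (shatters_iff_finset_shatters.mp hT).card_le_vcDim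

theorem VCD_le_of_forall_card_le {k : ℕ} (h𝒞 : ∀ C ∈ 𝒞, C.card ≤ k) : VCD 𝒞 ≤ k := by
  refine csSup_le' ?_
  rintro _ ⟨S, hS, rfl⟩
  obtain ⟨C, hC, hSC⟩ := (shatters_iff_finset_shatters.mp hS).exists_superset
  exact (Finset.card_le_card hSC).trans (h𝒞 C hC)

end Shattering

section Star

variable {V : Type*} [Fintype V] (G : SimpleGraph V)

theorem deg_le_maxDeg (x : V) : deg G x ≤ maxDeg G :=
  Finset.le_sup (Finset.mem_univ x)

theorem notMem_nbrFinset_self (x : V) : x ∉ nbrFinset G x := by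
  simp [nbrFinset]

theorem card_nbrFinset (x : V) : (nbrFinset G x).card = deg G x :=
  rfl

variable [DecidableEq V]

theorem card_closedNbr (x : V) : (closedNbr G x).card = deg G x + 1 := by
  rw [closedNbr, Finset.card_insert_of_notMem (notMem_nbrFinset_self G x), card_nbrFinset]

variable {G}

theorem mem_Cstar {C : Finset V} :
    C ∈ Cstar G ↔ ∃ x, ∃ Y ⊆ nbrFinset G x, C = insert x Y := by
  simp only [Cstar, Finset.mem_filter_univ]

theorem exists_subset_closedNbr_of_mem_Cstar {C : Finset V} (hC : C ∈ Cstar G) :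
    ∃ x, C ⊆ closedNbr G x := by
  obtain ⟨x, Y, hY, rfl⟩ := mem_Cstar.mp hC
  exact ⟨x, Finset.insert_subset_insert x hY⟩

theorem card_le_maxDeg_add_one_of_mem_Cstar {C : Finset V} (hC : C ∈ Cstar G) :
    C.card ≤ maxDeg G + 1 := by
  obtain ⟨x, hCx⟩ := exists_subset_closedNbr_of_mem_Cstar hC
  calc
    C.card ≤ (closedNbr G x).card := Finset.card_le_card hCx
    _ = deg G x + 1 := card_closedNbr G x
    _ ≤ maxDeg G + 1 := Nat.add_le_add_right (deg_le_maxDeg G x) 1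

variable (G)

theorem shatters_Cstar_nbrFinset (x : V) : Shatters (Cstar G) (nbrFinset G x) := by
  intro Y hY
  refine ⟨insert x Y, mem_Cstar.mpr ⟨x, Y, hY, rfl⟩, ?_⟩
  rw [Finset.insert_inter_of_notMem (notMem_nbrFinset_self G x), Finset.inter_eq_left.mpr hY]

theorem deg_le_VCD_Cstar (x : V) : deg G x ≤ VCD (Cstar G) :=
  card_nbrFinset G x ▸ (shatters_Cstar_nbrFinset G x).card_le_VCD

end Star

/-- For every finite simple graph with at least one vertex,
`Δ(G) ≤ VCD(C_star(G)) ≤ Δ(G) + 1`. -/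
theorem star_vcd_bounds {V : Type*} [Fintype V] [DecidableEq V] [Nonempty V]
    (G : SimpleGraph V) :
    maxDeg G ≤ VCD (Cstar G) ∧ VCD (Cstar G) ≤ maxDeg G + 1 := by
  constructor
  · exact Finset.sup_le fun x _ => deg_le_VCD_Cstar G x
  · exact VCD_le_of_forall_card_le fun _ => card_le_maxDeg_add_one_of_mem_Cstar
end

section
/- For every finite simple graph G = (V,E) with at least one vertex, RTD(C_star(G)) ≤ VCD(C_star(G)). -/
open scoped Classical

/-!
It suffices to find, in every nonempty subclass `𝒟` of the star class, a concept with a teaching set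
of size at most the VC-dimension `d`. A maximal member of `𝒟` teaches itself, so we are done if one
of them is shattered. Otherwise every maximal member `S` has a *gap*: a subset `A ⊆ S` that is not
the trace on `S` of a star, which means that every vertex whose closed neighborhood contains `A`
lies in `S \ A`. Let `A` be inclusion-maximal among the gaps of all maximal members, say a gap of
`S`; then `S = A ∪ {y | A ⊆ N(y)}`. If `A` is contained in another maximal member `T` with gap `B`,
then `A ∪ B` is a gap of `T`, so `B ⊆ A` and `T = A ∪ {y | A ⊆ N(y)} = S`. Now let `C` be minimal
among the members of `𝒟` that contain `A`. As `A` is not itself a star, there is some `p ∈ C \ A`,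
and `S \ {p}` teaches `C`: members agreeing with `C` there contain `A`, hence lie in `S`, hence
in `C`, hence equal `C`. Stars have at most `d + 1` elements, because the neighbors of a vertex are
shattered, so this teaching set has size at most `d`.
-/

section ConceptClass

variable {α : Type*} [DecidableEq α] {𝒞 : Finset (Finset α)} {A C D S : Finset α}

theorem IsTeachingSet.td_le_card (h : IsTeachingSet 𝒞 C D) : TD 𝒞 C ≤ D.card :=
  Nat.sInf_le ⟨D, h, rfl⟩

theorem isTeachingSet_self_of_maximal (hC : Maximal (· ∈ 𝒞) C) : IsTeachingSet 𝒞 C C := by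
  intro C' hC' hne
  by_contra! hagree
  have hsub : C ⊆ C' := fun x hx => (hagree x hx).2 hx
  exact hne (hC.eq_of_ge hC' hsub)

theorem tdmin_le_td (hC : C ∈ 𝒞) : TDmin 𝒞 ≤ TD 𝒞 C :=
  Nat.sInf_le ⟨C, hC, rfl⟩

theorem tdmin_empty : TDmin (∅ : Finset (Finset α)) = 0 := by
  simp [TDmin]

theorem rtd_le_of_forall_subset {d : ℕ}
    (h : ∀ 𝒟 ⊆ 𝒞, 𝒟.Nonempty → ∃ C ∈ 𝒟, TD 𝒟 C ≤ d) : RTD 𝒞 ≤ d := by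
  have tdmin_le {𝒟 : Finset (Finset α)} (h𝒟 : 𝒟.Nonempty → ∃ C ∈ 𝒟, TD 𝒟 C ≤ d) :
      TDmin 𝒟 ≤ d := by
    rcases 𝒟.eq_empty_or_nonempty with rfl | hne
    · exact tdmin_empty.trans_le d.zero_le
    · obtain ⟨C, hC, hCd⟩ := h𝒟 hne
      exact (tdmin_le_td hC).trans hCd
  fun_induction RTD 𝒞 with
  | case1 𝒞 _ => exact tdmin_le (h 𝒞 subset_rfl)
  | case2 𝒞 _ ih =>
    exact max_le (tdmin_le (h 𝒞 subset_rfl))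
      (ih fun 𝒟 h𝒟 => h 𝒟 (h𝒟.trans Finset.sdiff_subset))

theorem Shatters.card_le_vcd (h : Shatters 𝒞 S) : S.card ≤ VCD 𝒞 := by
  refine le_csSup ⟨(𝒞.sup id).card, ?_⟩ ⟨S, h, rfl⟩
  rintro _ ⟨T, hT, rfl⟩
  obtain ⟨C, hC, hCT⟩ := hT T subset_rfl
  exact Finset.card_le_card ((Finset.inter_eq_right.1 hCT).trans (Finset.le_sup (f := id) hC))

/-- `A` is a gap of `𝒞` in `S`: a subset of `S` witnessing that `𝒞` does not shatter `S`. -/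
def IsGap (𝒞 : Finset (Finset α)) (S A : Finset α) : Prop :=
  A ⊆ S ∧ ∀ C ∈ 𝒞, C ∩ S ≠ A

theorem exists_isGap_of_not_shatters (h : ¬ Shatters 𝒞 S) : ∃ A, IsGap 𝒞 S A := by
  simpa only [IsGap, Shatters, not_forall, not_exists, not_and, exists_prop] using h

theorem IsGap.notMem (h : IsGap 𝒞 S A) : A ∉ 𝒞 := fun hA =>
  h.2 A hA (Finset.inter_eq_left.2 h.1)

theorem exists_td_lt_card_of_forall_subset (hA : A ∉ 𝒞) (hne : ∃ C ∈ 𝒞, A ⊆ C)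
    (hS : ∀ C ∈ 𝒞, A ⊆ C → C ⊆ S) : ∃ C ∈ 𝒞, TD 𝒞 C < S.card := by
  obtain ⟨C, hC⟩ := (𝒞.filter (A ⊆ ·)).exists_minimal (by simpa [Finset.Nonempty] using hne)
  obtain ⟨hC𝒞, hAC⟩ := Finset.mem_filter.1 hC.prop
  obtain ⟨p, hpC, hpA⟩ : ∃ p ∈ C, p ∉ A :=
    Finset.not_subset.1 fun hCA => hA (hCA.antisymm hAC ▸ hC𝒞)
  have hCS : C ⊆ S := hS C hC𝒞 hAC
  have hteach : IsTeachingSet 𝒞 C (S.erase p) := by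
    intro M hM hMC
    by_contra! hagree
    have mem_iff {z : α} (hz : z ∈ S) (hzp : z ≠ p) : z ∈ M ↔ z ∈ C :=
      hagree z (Finset.mem_erase.2 ⟨hzp, hz⟩)
    have hAM : A ⊆ M := fun z hz =>
      (mem_iff (hCS (hAC hz)) (ne_of_mem_of_not_mem hz hpA)).2 (hAC hz)
    have hMsubC : M ⊆ C := by
      intro z hz
      obtain rfl | hzp := eq_or_ne z p
      · exact hpC
      · exact (mem_iff (hS M hM hAM hz) hzp).1 hz
    exact hMC (hC.eq_of_le (Finset.mem_filter.2 ⟨hM, hAM⟩) hMsubC)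
  exact ⟨C, hC𝒞, hteach.td_le_card.trans_lt (Finset.card_erase_lt_of_mem (hCS hpC))⟩

end ConceptClass

section Star

variable {V : Type*} [Fintype V] [DecidableEq V] {G : SimpleGraph V} {A B C S T : Finset V}

theorem mem_cstar_iff : C ∈ Cstar G ↔ ∃ x ∈ C, C ⊆ closedNbr G x := by
  simp only [Cstar, Finset.mem_filter, Finset.mem_univ, true_and, closedNbr]
  constructor
  · rintro ⟨x, Y, hY, rfl⟩
    exact ⟨x, Finset.mem_insert_self x Y, Finset.insert_subset_insert x hY⟩
  · rintro ⟨x, hx, hC⟩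
    exact ⟨x, C.erase x, Finset.subset_insert_iff.1 hC, (Finset.insert_erase hx).symm⟩

theorem insert_mem_cstar {x : V} (h : A ⊆ closedNbr G x) : insert x A ∈ Cstar G :=
  mem_cstar_iff.2 ⟨x, Finset.mem_insert_self x A,
    Finset.insert_subset (Finset.mem_insert_self x _) h⟩

theorem shatters_cstar_of_subset_nbrFinset {x : V} (h : S ⊆ nbrFinset G x) :
    Shatters (Cstar G) S := by
  intro A hA
  have hx : x ∉ S := fun hxS => by simpa [nbrFinset] using h hxS
  refine ⟨insert x A, insert_mem_cstar ((hA.trans h).trans (Finset.subset_insert x _)), ?_⟩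
  rw [Finset.insert_inter_of_notMem hx, Finset.inter_eq_left.2 hA]

theorem card_le_vcd_cstar_add_one (hC : C ∈ Cstar G) : C.card ≤ VCD (Cstar G) + 1 := by
  obtain ⟨x, Y, hY, rfl⟩ := (Finset.mem_filter.1 hC).2
  calc (insert x Y).card ≤ Y.card + 1 := Finset.card_insert_le x Y
    _ ≤ VCD (Cstar G) + 1 := by gcongr; exact (shatters_cstar_of_subset_nbrFinset hY).card_le_vcd

theorem isGap_cstar_iff :
    IsGap (Cstar G) S A ↔ A ⊆ S ∧ ∀ y, A ⊆ closedNbr G y → y ∈ S \ A := by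
  refine and_congr_right fun hAS => ⟨fun hgap y hy => ?_, fun hcenter C hC hCA => ?_⟩
  · by_contra hyA
    refine hgap _ (insert_mem_cstar hy) ?_
    grind
  · obtain ⟨y, hyC, hCy⟩ := mem_cstar_iff.1 hC
    have hAy : A ⊆ closedNbr G y := (hCA ▸ Finset.inter_subset_left).trans hCy
    obtain ⟨hyS, hyA⟩ := Finset.mem_sdiff.1 (hcenter y hAy)
    exact hyA (hCA ▸ Finset.mem_inter.2 ⟨hyC, hyS⟩)

theorem IsGap.union_cstar (hA : IsGap (Cstar G) S A) (hB : IsGap (Cstar G) T B) (hAT : A ⊆ T) :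
    IsGap (Cstar G) T (A ∪ B) := by
  rw [isGap_cstar_iff] at *
  refine ⟨Finset.union_subset hAT hB.1, fun y hy => ?_⟩
  have hyA := hA.2 y (Finset.union_subset_left hy)
  have hyB := hB.2 y (Finset.union_subset_right hy)
  grind

theorem mem_iff_of_maximal_isGap_cstar (hA : Maximal (IsGap (Cstar G) S) A) {v : V} :
    v ∈ S ↔ v ∈ A ∨ A ⊆ closedNbr G v := by
  obtain ⟨hAS, hcenter⟩ := isGap_cstar_iff.1 hA.prop
  refine ⟨fun hvS => ?_, ?_⟩
  · by_contra! hv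
    have hgap : IsGap (Cstar G) S (insert v A) := by
      refine isGap_cstar_iff.2 ⟨Finset.insert_subset hvS hAS, fun y hy => ?_⟩
      have hAy : A ⊆ closedNbr G y := (Finset.subset_insert v A).trans hy
      have hyv : y ≠ v := fun h => hv.2 (h ▸ hAy)
      have hyA := hcenter y hAy
      grind
    exact hv.1 (hA.le_of_ge hgap (Finset.subset_insert v A) (Finset.mem_insert_self v A))
  · rintro (hvA | hAv)
    · exact hAS hvA
    · exact (Finset.mem_sdiff.1 (hcenter v hAv)).1

theorem exists_isGap_cstar_forall_eq {𝒮 : Set (Finset V)} (hne : 𝒮.Nonempty)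
    (h𝒮 : ∀ S ∈ 𝒮, ¬ Shatters (Cstar G) S) :
    ∃ S ∈ 𝒮, ∃ A, IsGap (Cstar G) S A ∧ ∀ T ∈ 𝒮, A ⊆ T → T = S := by
  have hgaps : {A | ∃ S ∈ 𝒮, IsGap (Cstar G) S A}.Nonempty := by
    obtain ⟨S, hS⟩ := hne
    obtain ⟨A, hA⟩ := exists_isGap_of_not_shatters (h𝒮 S hS)
    exact ⟨A, S, hS, hA⟩
  obtain ⟨A, hA⟩ := (Set.toFinite _).exists_maximal hgaps
  have maximal_isGap {T : Finset V} (hT : T ∈ 𝒮) (hgap : IsGap (Cstar G) T A) :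
      Maximal (IsGap (Cstar G) T) A :=
    ⟨hgap, fun _ hB hAB => hA.le_of_ge ⟨T, hT, hB⟩ hAB⟩
  obtain ⟨S, hS, hAS⟩ := hA.prop
  refine ⟨S, hS, A, hAS, fun T hT hAT => ?_⟩
  obtain ⟨B, hB⟩ := exists_isGap_of_not_shatters (h𝒮 T hT)
  have hAB : IsGap (Cstar G) T (A ∪ B) := hAS.union_cstar hB hAT
  have hunion : A = A ∪ B := hA.eq_of_le ⟨T, hT, hAB⟩ Finset.subset_union_left
  have hgapT : IsGap (Cstar G) T A := hunion ▸ hAB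
  ext v
  rw [mem_iff_of_maximal_isGap_cstar (maximal_isGap hT hgapT),
    mem_iff_of_maximal_isGap_cstar (maximal_isGap hS hAS)]

theorem exists_td_le_vcd_cstar {𝒟 : Finset (Finset V)} (h𝒟 : 𝒟 ⊆ Cstar G) (hne : 𝒟.Nonempty) :
    ∃ C ∈ 𝒟, TD 𝒟 C ≤ VCD (Cstar G) := by
  by_cases hshat : ∃ M, Maximal (· ∈ 𝒟) M ∧ Shatters (Cstar G) M
  · obtain ⟨M, hM, hMshat⟩ := hshat
    exact ⟨M, hM.prop, (isTeachingSet_self_of_maximal hM).td_le_card.trans hMshat.card_le_vcd⟩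
  · push Not at hshat
    obtain ⟨S, hS, A, hA, hunique⟩ :=
      exists_isGap_cstar_forall_eq (𝒮 := {M | Maximal (· ∈ 𝒟) M}) (𝒟.exists_maximal hne) hshat
    have hbound : ∀ C ∈ 𝒟, A ⊆ C → C ⊆ S := by
      intro C hC hAC
      obtain ⟨M, hCM, hM⟩ := 𝒟.exists_le_maximal hC
      exact hunique M hM (hAC.trans hCM) ▸ hCM
    obtain ⟨C, hC, hCS⟩ := exists_td_lt_card_of_forall_subset
      (fun hA𝒟 => hA.notMem (h𝒟 hA𝒟)) ⟨S, hS.prop, hA.1⟩ hbound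
    exact ⟨C, hC, Nat.lt_succ_iff.1 (hCS.trans_le (card_le_vcd_cstar_add_one (h𝒟 hS.prop)))⟩

end Star

/-- For every finite simple graph with at least one vertex,
`RTD(C_star(G)) ≤ VCD(C_star(G))`. -/
theorem star_rtd_le_vcd {V : Type*} [Fintype V] [DecidableEq V] [Nonempty V]
    (G : SimpleGraph V) :
    RTD (Cstar G) ≤ VCD (Cstar G) := by
  exact rtd_le_of_forall_subset fun _ => exists_td_le_vcd_cstar
end

section
/- For every finite tree T with at least two vertices, VCD(C_con(T)) = ℓ(T), where ℓ(T) is the number of leaves of T. -/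
open scoped Classical

/-!
The leaves of a connected graph are shattered, since deleting leaves keeps it connected.

Conversely, let `S` be shattered in a forest and have at least two elements. For `s ∈ S`, a path
from another element of `S` to `s` can be prolonged until it ends in a leaf `x`, and then `s`
separates the former from `x`. Some connected set contains `S \ {s}` but not `s`, so `s` separates
every other element of `S` from `x`. This makes `s ↦ x` injective: two vertices cannot each
separate the other one from the same vertex if that vertex is reachable from them.
-/

section VCDimension

variable {α : Type*} [DecidableEq α] {𝒞 : Finset (Finset α)} {S : Finset α}

theorem VCD_eq_card_of_shatters (hS : Shatters 𝒞 S)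
    (hmax : ∀ R, Shatters 𝒞 R → R.card ≤ S.card) : VCD 𝒞 = S.card := by
  refine IsGreatest.csSup_eq ⟨⟨S, hS, rfl⟩, ?_⟩
  rintro _ ⟨R, hR, rfl⟩
  exact hmax R hR

end VCDimension

section Separation

variable {V : Type*} {G : SimpleGraph V} {s t a b x : V}

/-- `s` separates `a` from `b` in `G`: every walk from `a` to `b` passes through `s`. The vertex `s`
may be one of `a` and `b`, and the condition is void if `a` and `b` are not connected. -/
def Separates (G : SimpleGraph V) (s a b : V) : Prop :=
  ∀ w : G.Walk a b, s ∈ w.support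

theorem Separates.of_notMem_support (h : Separates G s a x) {w : G.Walk a b}
    (hw : s ∉ w.support) : Separates G s b x := fun w' =>
  ((w.mem_support_append_iff w').1 (h (w.append w'))).resolve_left hw

theorem Separates.antisymm (hst : Separates G s t x) (hts : Separates G t s x)
    (hsx : G.Reachable s x) : s = t := by
  classical
  obtain ⟨p, hp⟩ := hsx.exists_isPath
  have ht : t ∈ p.support := hts p
  by_contra hne
  rw [← p.take_spec ht] at hp
  exact hp.ne_of_mem_support_of_append hne (p.takeUntil t ht).start_mem_support
    (hst (p.dropUntil t ht)) rfl

theorem separates_of_mem_support_of_isPath (hG : G.IsAcyclic) {p : G.Walk a b} (hp : p.IsPath)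
    (hs : s ∈ p.support) : Separates G s a b := by
  classical
  intro w
  have hpw : p = w.bypass :=
    congrArg Subtype.val ((hG.subsingleton_path a b).elim ⟨p, hp⟩ ⟨w.bypass, w.bypass_isPath⟩)
  exact w.support_bypass_subset_support (hpw ▸ hs)

end Separation

section Walks

variable {V : Type*} {G : SimpleGraph V} {r s a b : V} {A : Finset V}

theorem exists_isPath_append_forall_adj_mem_support [Finite V] {p : G.Walk r s} (hp : p.IsPath) :
    ∃ (x : V) (q : G.Walk s x), (p.append q).IsPath ∧
      ∀ y, G.Adj x y → y ∈ (p.append q).support := by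
  have := Fintype.ofFinite V
  let lengths := {n | ∃ (x : V) (q : G.Walk s x), (p.append q).IsPath ∧ q.length = n}
  have hbdd : BddAbove lengths := by
    refine ⟨Fintype.card V, ?_⟩
    rintro _ ⟨x, q, hq, rfl⟩
    exact hq.of_append_right.length_lt.le
  obtain ⟨x, q, hq, hlength⟩ : sSup lengths ∈ lengths :=
    Nat.sSup_mem ⟨0, s, .nil, by simpa using hp, rfl⟩ hbdd
  refine ⟨x, q, hq, fun y hxy => ?_⟩
  by_contra hy
  have hlonger : q.length + 1 ∈ lengths := by
    refine ⟨y, q.concat hxy, ?_, q.length_concat hxy⟩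
    rw [SimpleGraph.Walk.append_concat]
    exact hq.concat hy hxy
  have hle : q.length + 1 ≤ sSup lengths := le_csSup hbdd hlonger
  omega

theorem IsConnSet.exists_walk_support_subset (hA : IsConnSet G A) (ha : a ∈ A) (hb : b ∈ A) :
    ∃ w : G.Walk a b, ∀ v ∈ w.support, v ∈ A := by
  obtain ⟨w⟩ := hA.preconnected ⟨a, ha⟩ ⟨b, hb⟩
  let inclusion := (SimpleGraph.Embedding.induce (G := G) (A : Set V)).toHom
  have hsupport : ∀ v ∈ (w.map inclusion).support, v ∈ A := by
    rw [SimpleGraph.Walk.support_map]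
    intro v hv
    obtain ⟨u, -, rfl⟩ := List.mem_map.1 hv
    exact u.2
  exact ⟨w.map inclusion, hsupport⟩

end Walks

section Leaves

variable {V : Type*} [Fintype V] {G : SimpleGraph V} {r s v x : V} {A : Finset V}

/-- The set of leaves, whose cardinality is `leafCount G`. -/
noncomputable def leaves (G : SimpleGraph V) : Finset V :=
  Finset.univ.filter (IsLeaf G)

theorem mem_leaves : v ∈ leaves G ↔ IsLeaf G v := by
  simp [leaves]

theorem isLeaf_iff_existsUnique_adj : IsLeaf G v ↔ ∃! w, G.Adj v w := by
  simp [IsLeaf, deg, Finset.card_eq_one_iff_existsUnique]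

theorem isConnSet_of_forall_notMem_isLeaf (hG : G.Preconnected) (hA : A.Nonempty)
    (hleaf : ∀ v ∉ A, IsLeaf G v) : IsConnSet G A := by
  have : Nonempty (A : Set V) := hA.to_subtype
  refine ⟨hG.induce_of_degree_eq_one fun v hv y hy z hz => ?_⟩
  exact (isLeaf_iff_existsUnique_adj.1 (hleaf v hv)).unique hy hz

theorem isLeaf_of_isPath_of_forall_adj_mem_support (hG : G.IsAcyclic) {p : G.Walk r x}
    (hp : p.IsPath) (hne : r ≠ x) (hadj : ∀ y, G.Adj x y → y ∈ p.support) : IsLeaf G x :=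
  isLeaf_iff_existsUnique_adj.2
    ⟨p.penultimate, (p.adj_penultimate (SimpleGraph.Walk.not_nil_of_ne hne)).symm,
      fun y hy => hG.eq_penultimate_of_adj_end hp hy (hadj y hy)⟩

theorem exists_isLeaf_separates (hG : G.IsAcyclic) (hrs : G.Reachable r s) (hne : r ≠ s) :
    ∃ x, IsLeaf G x ∧ G.Reachable s x ∧ Separates G s r x := by
  obtain ⟨p, hp⟩ := hrs.exists_isPath
  obtain ⟨x, q, hpq, hadj⟩ := exists_isPath_append_forall_adj_mem_support hp
  have hs : s ∈ (p.append q).support :=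
    (p.mem_support_append_iff q).2 (.inl p.end_mem_support)
  have hrx : r ≠ x := by
    rintro rfl
    rw [SimpleGraph.Walk.eq_nil_iff_nil.2 (SimpleGraph.Walk.isPath_iff_nil.1 hpq),
      SimpleGraph.Walk.mem_support_nil_iff] at hs
    exact hne hs.symm
  exact ⟨x, isLeaf_of_isPath_of_forall_adj_mem_support hG hpq hrx hadj, ⟨q⟩,
    separates_of_mem_support_of_isPath hG hpq hs⟩

theorem leafCount_pos (hG : G.IsAcyclic) (hne : G ≠ ⊥) : 0 < leafCount G := by
  obtain ⟨r, s, hrs⟩ := SimpleGraph.ne_bot_iff_exists_adj.1 hne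
  obtain ⟨x, hx, -⟩ := exists_isLeaf_separates hG hrs.reachable hrs.ne
  exact Finset.card_pos.2 ⟨x, mem_leaves.2 hx⟩

end Leaves

section ConnectedSets

variable {V : Type*} [Fintype V] [DecidableEq V] {G : SimpleGraph V} {A S R : Finset V} {a b s : V}

theorem mem_Ccon : A ∈ Ccon G ↔ A = ∅ ∨ IsConnSet G A := by
  simp [Ccon]

theorem shatters_Ccon_leaves (hG : G.Preconnected) : Shatters (Ccon G) (leaves G) := by
  intro R hR
  rcases R.eq_empty_or_nonempty with rfl | hne
  · exact ⟨∅, mem_Ccon.2 (.inl rfl), Finset.empty_inter _⟩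
  · refine ⟨R ∪ (leaves G)ᶜ, mem_Ccon.2 (.inr ?_), ?_⟩
    · refine isConnSet_of_forall_notMem_isLeaf hG (hne.mono Finset.subset_union_left) fun v hv => ?_
      simp_all [mem_leaves]
    · rw [Finset.union_inter_distrib_right, Finset.inter_eq_left.2 hR, Finset.inter_comm _ᶜ,
        Finset.inter_compl, Finset.union_empty]

theorem Shatters.exists_walk_support_inter_subset (hS : Shatters (Ccon G) S) (hR : R ⊆ S)
    (ha : a ∈ R) (hb : b ∈ R) : ∃ w : G.Walk a b, ∀ v ∈ w.support, v ∈ S → v ∈ R := by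
  obtain ⟨C, hC, rfl⟩ := hS R hR
  rw [Finset.mem_inter] at ha hb
  have hconn : IsConnSet G C :=
    (mem_Ccon.1 hC).resolve_left (Finset.ne_empty_of_mem ha.1)
  obtain ⟨w, hw⟩ := hconn.exists_walk_support_subset ha.1 hb.1
  exact ⟨w, fun v hv hvS => Finset.mem_inter.2 ⟨hw v hv, hvS⟩⟩

theorem Shatters.exists_walk_notMem_support (hS : Shatters (Ccon G) S) (hs : s ∈ S)
    (ha : a ∈ S.erase s) (hb : b ∈ S.erase s) : ∃ w : G.Walk a b, s ∉ w.support := by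
  obtain ⟨w, hw⟩ := hS.exists_walk_support_inter_subset (S.erase_subset s) ha hb
  exact ⟨w, fun h => S.notMem_erase s (hw s h hs)⟩

theorem Shatters.reachable (hS : Shatters (Ccon G) S) (ha : a ∈ S) (hb : b ∈ S) :
    G.Reachable a b :=
  let ⟨w, _⟩ := hS.exists_walk_support_inter_subset subset_rfl ha hb
  ⟨w⟩

theorem Shatters.exists_isLeaf_forall_separates (hS : Shatters (Ccon G) S) (hG : G.IsAcyclic)
    (hcard : 1 < S.card) (hs : s ∈ S) :
    ∃ x, IsLeaf G x ∧ G.Reachable s x ∧ ∀ t ∈ S.erase s, Separates G s t x := by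
  obtain ⟨r, hr, hrs⟩ := S.exists_mem_ne hcard s
  obtain ⟨x, hx, hsx, hsep⟩ := exists_isLeaf_separates hG (hS.reachable hr hs) hrs
  refine ⟨x, hx, hsx, fun t ht => ?_⟩
  obtain ⟨w, hw⟩ := hS.exists_walk_notMem_support hs (Finset.mem_erase.2 ⟨hrs, hr⟩) ht
  exact hsep.of_notMem_support hw

theorem Shatters.card_le_leafCount_of_one_lt_card (hS : Shatters (Ccon G) S) (hG : G.IsAcyclic)
    (hcard : 1 < S.card) : S.card ≤ leafCount G := by
  choose! f hleaf hreach hsep using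
    fun s (hs : s ∈ S) => hS.exists_isLeaf_forall_separates hG hcard hs
  refine Finset.card_le_card_of_injOn f (fun s hs => mem_leaves.2 (hleaf s hs)) ?_
  intro s hs t ht hst
  by_contra hne
  have hst_sep : Separates G s t (f s) := hsep s hs t (Finset.mem_erase.2 ⟨Ne.symm hne, ht⟩)
  have hts_sep : Separates G t s (f s) := hst ▸ hsep t ht s (Finset.mem_erase.2 ⟨hne, hs⟩)
  exact hne (hst_sep.antisymm hts_sep (hreach s hs))

theorem Shatters.card_le_leafCount (hS : Shatters (Ccon G) S) (hG : G.IsAcyclic) (hne : G ≠ ⊥) :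
    S.card ≤ leafCount G := by
  rcases le_or_gt S.card 1 with hcard | hcard
  · exact hcard.trans (leafCount_pos hG hne)
  · exact hS.card_le_leafCount_of_one_lt_card hG hcard

end ConnectedSets

/-- For every finite tree `T` with at least two vertices,
`VCD(C_con(T)) = ℓ(T)`, the number of leaves of `T`. -/
theorem con_vcd_tree {V : Type*} [Fintype V] [DecidableEq V]
    (T : SimpleGraph V) (htree : T.IsTree) (hcard : 2 ≤ Fintype.card V) :
    VCD (Ccon T) = leafCount T := by
  have : Nontrivial V := Fintype.one_lt_card_iff_nontrivial.1 hcard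
  have hne : T ≠ ⊥ := by
    rintro rfl
    exact SimpleGraph.not_connected_bot htree.connected
  exact VCD_eq_card_of_shatters (shatters_Ccon_leaves htree.connected.preconnected)
    fun S hS => hS.card_le_leafCount htree.isAcyclic hne
end
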